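/- arXiv:math/0702114 — 5 statements merged into one kernel-verified Lean document; each statement's English description precedes it below -/
import Mathlib

section
/- For every pair of indices 1 ≤ i < j ≤ 6, the set of points of ℙ³(ℂ) represented by x ∈ ℂ⁴∖{0} with Fᵢ(x) = Fⱼ(x) = S(x) = 0 has exactly 2 elements (each line Fᵢ = Fⱼ = 0 meets the quadric S = 0 in exactly two points). -/
open MvPolynomial

/-- The quadric `S = y₀·y₁ − y₂·y₃`. -/
noncomputable def polyS : MvPolynomial (Fin 4) ℂ := X 0 * X 1 - X 2 * X 3

/-- The six linear forms `F₁, …, F₆` (indexed by `Fin 6`). -/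
noncomputable def polyF : Fin 6 → MvPolynomial (Fin 4) ℂ :=
  ![X 0,
    X 1,
    4 * X 0 - 2 * X 2 - 2 * X 3 + X 1,
    X 0 - 2 * X 2 - 2 * X 3 + 4 * X 1,
    X 0 + X 2 + X 3 + X 1,
    X 0 - X 2 - X 3 + X 1]

/-- The line `Fᵢ = Fⱼ = 0` is given by `(y₀, y₁, y₂ + y₃) = t (a, b, u + v)`; if `u v = a b` and
`u ≠ v`, then it meets the quadric exactly in `[a, b, u, v]` and `[a, b, v, u]`. -/
theorem two_points_aux (f g : MvPolynomial (Fin 4) ℂ) (a b u v : ℂ) (huv : u ≠ v)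
    (hab : a * b = u * v)
    (h1 : ∀ x : Fin 4 → ℂ, eval x f = 0 → eval x g = 0 →
      ∃ t, x 0 = t * a ∧ x 1 = t * b ∧ x 2 + x 3 = t * (u + v))
    (h2 : ∀ x : Fin 4 → ℂ, x 0 = a → x 1 = b → x 2 + x 3 = u + v →
      eval x f = 0 ∧ eval x g = 0) :
    {p : Projectivization ℂ (Fin 4 → ℂ) |
      ∃ (x : Fin 4 → ℂ) (hx : x ≠ 0), Projectivization.mk ℂ x hx = p ∧
        eval x f = 0 ∧ eval x g = 0 ∧ eval x polyS = 0}.ncard = 2 := by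
  have hp : (![a, b, u, v] : Fin 4 → ℂ) ≠ 0 := by
    intro h
    have e2 := congrFun h 2
    have e3 := congrFun h 3
    simp at e2 e3
    exact huv (e2.trans e3.symm)
  have hq : (![a, b, v, u] : Fin 4 → ℂ) ≠ 0 := by
    intro h
    have e2 := congrFun h 2
    have e3 := congrFun h 3
    simp at e2 e3
    exact huv (e3.trans e2.symm)
  rw [Set.ncard_eq_two]
  refine ⟨Projectivization.mk ℂ _ hp, Projectivization.mk ℂ _ hq, ?_, ?_⟩
  · intro h
    rw [Projectivization.mk_eq_mk_iff'] at h
    obtain ⟨k, hk⟩ := h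
    have e0 := congrFun hk 0
    have e1 := congrFun hk 1
    have e2 := congrFun hk 2
    have e3 := congrFun hk 3
    simp only [Pi.smul_apply, smul_eq_mul, Matrix.cons_val] at e0 e1 e2 e3
    have hk1 : (k + 1) * (u - v) = 0 := by linear_combination e3 - e2
    have hk2 : k = -1 := by
      rcases mul_eq_zero.mp hk1 with h | h
      · linear_combination h
      · exact absurd (sub_eq_zero.mp h) huv
    subst hk2
    have ha : a = 0 := by linear_combination (-1 / 2 : ℂ) * e0
    have hu : u * u = 0 := by
      rw [ha] at hab
      linear_combination hab - u * e2
    have hu0 : u = 0 := mul_self_eq_zero.mp hu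
    exact huv (by linear_combination 2 * hu0 + e2)
  · ext p
    simp only [Set.mem_ofPred_eq, Set.mem_insert_iff, Set.mem_singleton_iff]
    constructor
    · rintro ⟨x, hx, rfl, hf, hg, hS⟩
      obtain ⟨t, e0, e1, es⟩ := h1 x hf hg
      simp only [polyS, map_sub, map_mul, eval_X] at hS
      have hprod : (x 2 - t * u) * (x 2 - t * v) = 0 := by
        rw [e0, e1] at hS
        linear_combination x 2 * es + hS - t ^ 2 * hab
      rcases mul_eq_zero.mp hprod with h | h
      · left
        rw [Projectivization.mk_eq_mk_iff']
        refine ⟨t, ?_⟩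
        ext n
        fin_cases n
        · simp [e0]
        · simp [e1]
        · simp
          linear_combination -h
        · simp
          linear_combination h - es
      · right
        rw [Projectivization.mk_eq_mk_iff']
        refine ⟨t, ?_⟩
        ext n
        fin_cases n
        · simp [e0]
        · simp [e1]
        · simp
          linear_combination -h
        · simp
          linear_combination h - es
    · rintro (rfl | rfl)
      · obtain ⟨hf, hg⟩ := h2 ![a, b, u, v] (by simp) (by simp) (by simp)
        exact ⟨_, hp, rfl, hf, hg, by simp [polyS, hab]⟩
      · obtain ⟨hf, hg⟩ := h2 ![a, b, v, u] (by simp) (by simp) (by simp [add_comm])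
        exact ⟨_, hq, rfl, hf, hg, by simp [polyS, hab, mul_comm]⟩

/-- Each line `Fᵢ = Fⱼ = 0` (for `i < j`) meets the quadric `S = 0` in exactly two
points of `ℙ³(ℂ)`. -/
theorem line_meets_quadric_in_two_points (i j : Fin 6) (hij : i < j) :
    {p : Projectivization ℂ (Fin 4 → ℂ) |
      ∃ (x : Fin 4 → ℂ) (hx : x ≠ 0), Projectivization.mk ℂ x hx = p ∧
        eval x (polyF i) = 0 ∧ eval x (polyF j) = 0 ∧ eval x polyS = 0}.ncard = 2 := by
  fin_cases i <;> fin_cases j <;> first | exact absurd hij (by decide) | skip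
  · refine two_points_aux _ _ (0) (0) (1) (0) (by norm_num) (by norm_num) ?_ ?_
    · intro x hf hg
      simp [polyF] at hf hg
      refine ⟨x 2 + x 3, ?_, ?_, ?_⟩ <;> grind
    · intro x e0 e1 e2
      simp [polyF]
      grind
  · refine two_points_aux _ _ (0) (2) (1) (0) (by norm_num) (by norm_num) ?_ ?_
    · intro x hf hg
      simp [polyF] at hf hg
      refine ⟨x 2 + x 3, ?_, ?_, ?_⟩ <;> grind
    · intro x e0 e1 e2
      simp [polyF]
      grind
  · refine two_points_aux _ _ (0) (1) (2) (0) (by norm_num) (by norm_num) ?_ ?_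
    · intro x hf hg
      simp [polyF] at hf hg
      refine ⟨x 1, ?_, ?_, ?_⟩ <;> grind
    · intro x e0 e1 e2
      simp [polyF]
      grind
  · refine two_points_aux _ _ (0) (-1) (1) (0) (by norm_num) (by norm_num) ?_ ?_
    · intro x hf hg
      simp [polyF] at hf hg
      refine ⟨x 2 + x 3, ?_, ?_, ?_⟩ <;> grind
    · intro x e0 e1 e2
      simp [polyF]
      grind
  · refine two_points_aux _ _ (0) (1) (1) (0) (by norm_num) (by norm_num) ?_ ?_
    · intro x hf hg
      simp [polyF] at hf hg
      refine ⟨x 1, ?_, ?_, ?_⟩ <;> grind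
    · intro x e0 e1 e2
      simp [polyF]
      grind
  · refine two_points_aux _ _ (1) (0) (2) (0) (by norm_num) (by norm_num) ?_ ?_
    · intro x hf hg
      simp [polyF] at hf hg
      refine ⟨x 0, ?_, ?_, ?_⟩ <;> grind
    · intro x e0 e1 e2
      simp [polyF]
      grind
  · refine two_points_aux _ _ (2) (0) (1) (0) (by norm_num) (by norm_num) ?_ ?_
    · intro x hf hg
      simp [polyF] at hf hg
      refine ⟨x 2 + x 3, ?_, ?_, ?_⟩ <;> grind
    · intro x e0 e1 e2
      simp [polyF]
      grind
  · refine two_points_aux _ _ (-1) (0) (1) (0) (by norm_num) (by norm_num) ?_ ?_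
    · intro x hf hg
      simp [polyF] at hf hg
      refine ⟨x 2 + x 3, ?_, ?_, ?_⟩ <;> grind
    · intro x e0 e1 e2
      simp [polyF]
      grind
  · refine two_points_aux _ _ (1) (0) (1) (0) (by norm_num) (by norm_num) ?_ ?_
    · intro x hf hg
      simp [polyF] at hf hg
      refine ⟨x 0, ?_, ?_, ?_⟩ <;> grind
    · intro x e0 e1 e2
      simp [polyF]
      grind
  · refine two_points_aux _ _ (2) (2) (4) (1) (by norm_num) (by norm_num) ?_ ?_
    · intro x hf hg
      simp [polyF] at hf hg
      refine ⟨x 0 / 2, ?_, ?_, ?_⟩ <;> grind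
    · intro x e0 e1 e2
      simp [polyF]
      grind
  · refine two_points_aux _ _ (1) (-2) (2) (-1) (by norm_num) (by norm_num) ?_ ?_
    · intro x hf hg
      simp [polyF] at hf hg
      refine ⟨x 0, ?_, ?_, ?_⟩ <;> grind
    · intro x e0 e1 e2
      simp [polyF]
      grind
  · refine two_points_aux _ _ (1) (2) (2) (1) (by norm_num) (by norm_num) ?_ ?_
    · intro x hf hg
      simp [polyF] at hf hg
      refine ⟨x 0, ?_, ?_, ?_⟩ <;> grind
    · intro x e0 e1 e2
      simp [polyF]
      grind
  · refine two_points_aux _ _ (-2) (1) (2) (-1) (by norm_num) (by norm_num) ?_ ?_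
    · intro x hf hg
      simp [polyF] at hf hg
      refine ⟨x 1, ?_, ?_, ?_⟩ <;> grind
    · intro x e0 e1 e2
      simp [polyF]
      grind
  · refine two_points_aux _ _ (2) (1) (2) (1) (by norm_num) (by norm_num) ?_ ?_
    · intro x hf hg
      simp [polyF] at hf hg
      refine ⟨x 1, ?_, ?_, ?_⟩ <;> grind
    · intro x e0 e1 e2
      simp [polyF]
      grind
  · refine two_points_aux _ _ (1) (-1) (1) (-1) (by norm_num) (by norm_num) ?_ ?_
    · intro x hf hg
      simp [polyF] at hf hg
      refine ⟨x 0, ?_, ?_, ?_⟩ <;> grind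
    · intro x e0 e1 e2
      simp [polyF]
      grind
end

section
/- For every triple of indices 1 ≤ i < j < k ≤ 6, the only common zero in ℂ⁴ of the four polynomials Fᵢ, Fⱼ, F_k and S is the point 0 (i.e. no three of the six planes meet the quadric S in a common point of ℙ³(ℂ)). -/
open MvPolynomial

/-- No three of the six planes meet the quadric `S` in a common point of `ℙ³(ℂ)`:
the only common zero in `ℂ⁴` of `Fᵢ, Fⱼ, F_k, S` is `0`. -/
theorem no_three_planes_meet_quadric (i j k : Fin 6) (hij : i < j) (hjk : j < k)
    (x : Fin 4 → ℂ)
    (hi : eval x (polyF i) = 0) (hj : eval x (polyF j) = 0)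
    (hk : eval x (polyF k) = 0) (hS : eval x polyS = 0) :
    x = 0 := by
  have key : x 0 = 0 ∧ x 1 = 0 ∧ x 2 + x 3 = 0 := by
    clear hS
    fin_cases i <;> fin_cases j <;> first
      | exact absurd hij (by decide)
      | (fin_cases k <;> first
          | exact absurd hjk (by decide)
          | (clear hij hjk
             simp [polyF] at hi hj hk
             refine ⟨?_, ?_, ?_⟩ <;> grind))
  obtain ⟨h0, h1, h2⟩ := key
  simp only [polyS, map_sub, map_mul, eval_X] at hS
  have h3 : x 3 = - x 2 := by linear_combination h2
  have h4 : x 2 = 0 := by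
    have : x 2 * x 2 = 0 := by
      rw [h0, h3] at hS
      linear_combination hS
    exact mul_self_eq_zero.mp this
  funext l
  fin_cases l
  · exact h0
  · exact h1
  · exact h4
  · change x 3 = 0
    rw [h3, h4, neg_zero]
end

section
/- The polynomial S¹⁰ belongs to the Jacobian ideal of B₆, i.e. S¹⁰ lies in the ideal of ℂ[y₀,y₁,y₂,y₃] generated by the four partial derivatives ∂B₆/∂y₀, ∂B₆/∂y₁, ∂B₆/∂y₂, ∂B₆/∂y₃. In particular, every x ∈ ℂ⁴∖{0} at which all four partial derivatives of B₆ vanish satisfies S(x) = 0. -/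
open MvPolynomial

/-- The sextic `B₆ = F₁·F₂·F₃·F₄·F₅·F₆ − S³`. -/
noncomputable def polyB6 : MvPolynomial (Fin 4) ℂ := (∏ i : Fin 6, polyF i) - polyS ^ 3

/-- Partial derivatives of `P(u, c, s) = c (4u² + 9c − 20su + 16s²)(u² − 4s²)`, where `u = y₀ + y₁`,
`c = y₀ y₁`, `2 s = y₂ + y₃`; `P` is the product of the six linear forms. -/
def Pu {A : Type*} [CommRing A] (u c s : A) : A :=
  16 * u^3 * c - 60 * u^2 * c * s + 18 * u * c^2 + 80 * c * s^3

/-- The derivative of `P` in `c`. -/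
def Pc {A : Type*} [CommRing A] (u c s : A) : A :=
  4 * u^4 - 20 * u^3 * s + 18 * u^2 * c + 80 * u * s^3 - 72 * c * s^2 - 64 * s^4

/-- The derivative of `P` in `s`. -/
def Ps {A : Type*} [CommRing A] (u c s : A) : A :=
  - 20 * u^3 * c + 240 * u * c * s^2 - 72 * c^2 * s - 256 * c * s^3

/-- The polynomial `P` itself. -/
def PP {A : Type*} [CommRing A] (u c s : A) : A :=
  4 * u^4 * c - 20 * u^3 * c * s + 9 * u^2 * c^2 + 80 * u * c * s^3 - 36 * c^2 * s^2 - 64 * c *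
  s^4

/-- The key certificate: `(c - s²)⁴ P` is in the ideal of the symmetrised relations. -/
theorem certificate {A : Type*} [CommRing A] (u c s : A)
    (g1 : (u ^ 2 - 4 * c) * Pu u c s = 0)
    (g2 : 4 * s * Pu u c s + u * (2 * s * Pc u c s + Ps u c s) = 0)
    (g4 : 2 * u * s * Pu u c s + 2 * c * (2 * s * Pc u c s + Ps u c s) = 0)
    (h1 : Ps u c s * (Ps u c s + 6 * (c - s ^ 2) ^ 2 * s) = 0) :
    3701376000 * ((c - s ^ 2) ^ 4 * PP u c s) = 0 := by
  unfold Pu Pc Ps PP at *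
  linear_combination
    (- 506090428 * u^6 * s + 562914070 * u^5 * c + 5470104460 * u^5 * s^2 - 13113928654 * u^4 * c * s
      - 12675091912 * u^4 * s^3 - 2283555240 * u^3 * c^2 + 42881323300 * u^3 * c * s^2 - 20349401000 *
      u^3 * s^4 + 7983887400 * u^2 * c^2 * s + 41818720100 * u^2 * c * s^3 + 67659273248 * u^2 * s^5 -
      462672000 * u * c^3 - 6818112000 * u * c^2 * s^2 - 248388399200 * u * c * s^4 - 6445187360 * u *
      s^6 + 8291023200 * c^2 * s^3 + 175057392464 * c * s^5 - 37026033408 * s^7) * g1 +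
    (1012180856 * u^6 * c - 9674982850 * u^5 * c * s - 4027404953 * u^4 * c^2 + 18001053024 * u^4 * c
      * s^2 + 40983771400 * u^3 * c^2 * s + 20458164940 * u^3 * c * s^3 - 94247607894 * u^2 * c^2 *
      s^2 - 30233336000 * u^2 * c * s^4 - 93315232720 * u * c^2 * s^3 - 20483408880 * u * c * s^5 +
      8544669264 * c^4 + 45452664792 * c^3 * s^2 + 202401041600 * c^2 * s^4 + 901670400 * c * s^6) * g2 +
    (- 3786311520 * c^3 * s + 1803375360 * s^7) * g4 +
    (28092480 * u^4 - 105452400 * u^3 * s - 45292920 * u^2 * c + 20976000 * u^2 * s^2 + 263366400 * u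
      * c * s + 158443200 * u * s^3 - 142777440 * c^2 - 63096000 * c * s^2 - 146338560 * s^4) * h1

/-- In any commutative ring where `2`, `6` and the denominator of the certificate are invertible,
the vanishing of the four partial derivatives forces `S ^ 10 = 0`. -/
theorem core {A : Type*} [CommRing A] (a b s e S k : A) (hk : k * 3701376000 = 1)
    (hS : S = a * b - s ^ 2 + e ^ 2)
    (Ra : Pu (a + b) (a * b) s + b * Pc (a + b) (a * b) s - 3 * S ^ 2 * b = 0)
    (Rb : Pu (a + b) (a * b) s + a * Pc (a + b) (a * b) s - 3 * S ^ 2 * a = 0)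
    (Rs : Ps (a + b) (a * b) s + 6 * S ^ 2 * s = 0)
    (Re : S ^ 2 * e = 0) : S ^ 10 = 0 := by
  have hq : S ^ 3 = S ^ 2 * (a * b - s ^ 2) := by
    linear_combination S ^ 2 * hS + e * Re
  have hq2 : S ^ 4 = S ^ 2 * (a * b - s ^ 2) ^ 2 := by
    linear_combination (S + (a * b - s ^ 2)) * hq
  have hP : PP (a + b) (a * b) s = S ^ 2 * (a * b - s ^ 2) := by
    have euler : 6 * PP (a + b) (a * b) s =
        (a + b) * Pu (a + b) (a * b) s + 2 * (a * b) * Pc (a + b) (a * b) s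
          + s * Ps (a + b) (a * b) s := by
      unfold PP Pu Pc Ps; ring
    have h6 : 6 * (PP (a + b) (a * b) s - S ^ 2 * (a * b - s ^ 2)) = 0 := by
      linear_combination euler + a * Ra + b * Rb + s * Rs
    linear_combination (-(PP (a + b) (a * b) s - S ^ 2 * (a * b - s ^ 2))) * hk + 616896000 * k * h6
  have key := certificate (a + b) (a * b) s
    (by linear_combination (a - b) * (a * Ra - b * Rb))
    (by linear_combination (a + b) * Rs + 2 * s * Ra + 2 * s * Rb)
    (by linear_combination a * (b * Rs + 2 * s * Ra) + b * (a * Rs + 2 * s * Rb))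
    (by linear_combination (Ps (a + b) (a * b) s + 6 * (a * b - s ^ 2) ^ 2 * s - 6 * S ^ 2 * s) * Rs
          + 36 * s ^ 2 * hq2)
  have key2 : (a * b - s ^ 2) ^ 4 * PP (a + b) (a * b) s = 0 := by
    linear_combination (-((a * b - s ^ 2) ^ 4 * PP (a + b) (a * b) s)) * hk + k * key
  rw [hP] at key2
  have h7 : S ^ 7 = 0 := by
    generalize a * b - s ^ 2 = q at *
    linear_combination key2 + (S ^ 4 + S ^ 3 * q + S ^ 2 * q ^ 2 + S * q ^ 3 + q ^ 4) * hq
  linear_combination S ^ 3 * h7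

theorem S_pow_ten_aux :
    polyS ^ 10 ∈ Ideal.span (Set.range fun i : Fin 4 => pderiv i polyB6) := by
  set J := Ideal.span (Set.range fun i : Fin 4 => pderiv i polyB6) with hJ
  have hz : ∀ i : Fin 4, Ideal.Quotient.mk J (pderiv i polyB6) = 0 := fun i =>
    Ideal.Quotient.eq_zero_iff_mem.2 (Ideal.subset_span ⟨i, rfl⟩)
  rw [← Ideal.Quotient.eq_zero_iff_mem, map_pow]
  have h0 := hz 0
  have h1 := hz 1
  have h2 := hz 2
  have h3 := hz 3
  clear hz
  have d2 : ∀ i : Fin 4, pderiv i (2 : MvPolynomial (Fin 4) ℂ) = 0 := fun i => by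
    rw [← map_ofNat C 2]; exact pderiv_C
  have d4 : ∀ i : Fin 4, pderiv i (4 : MvPolynomial (Fin 4) ℂ) = 0 := fun i => by
    rw [← map_ofNat C 4]; exact pderiv_C
  have m2 : Ideal.Quotient.mk J 2 = 2 := map_ofNat _ 2
  have m3 : Ideal.Quotient.mk J 3 = 3 := map_ofNat _ 3
  have m4 : Ideal.Quotient.mk J 4 = 4 := map_ofNat _ 4
  simp [polyB6, polyF, polyS, Fin.prod_univ_succ, pderiv_X, Derivation.leibniz, Pi.single_apply,
    Derivation.leibniz_pow, d2, d4, m2, m3, m4] at h0 h1 h2 h3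
  have hhalf : Ideal.Quotient.mk J (C (1 / 2 : ℂ)) * 2 = 1 := by
    rw [← map_ofNat (Ideal.Quotient.mk J) 2, ← map_mul, ← map_ofNat C 2, ← map_mul]
    norm_num
  have hk : Ideal.Quotient.mk J (C (1 / 3701376000 : ℂ)) * 3701376000 = 1 := by
    rw [← map_ofNat (Ideal.Quotient.mk J) 3701376000, ← map_mul, ← map_ofNat C 3701376000, ← map_mul]
    norm_num
  have hSS : Ideal.Quotient.mk J polyS = Ideal.Quotient.mk J (X 0) * Ideal.Quotient.mk J (X 1)
      - Ideal.Quotient.mk J (X 2) * Ideal.Quotient.mk J (X 3) := by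
    simp [polyS]
  generalize Ideal.Quotient.mk J polyS = S at *
  generalize Ideal.Quotient.mk J (C (1 / 2 : ℂ)) = half at *
  generalize Ideal.Quotient.mk J (C (1 / 3701376000 : ℂ)) = k at *
  generalize Ideal.Quotient.mk J (X 0) = a at *
  generalize Ideal.Quotient.mk J (X 1) = b at *
  generalize hy2 : Ideal.Quotient.mk J (X 2) = y2 at *
  generalize hy3 : Ideal.Quotient.mk J (X 3) = y3 at *
  clear hy2 hy3
  obtain ⟨s, e, rfl, rfl⟩ : ∃ s e, y2 = s + e ∧ y3 = s - e :=
    ⟨half * (y2 + y3), half * (y2 - y3), by linear_combination (-y2) * hhalf,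
      by linear_combination (-y3) * hhalf⟩
  rw [← hSS] at h0 h1 h2 h3
  refine core a b s e S k hk (by linear_combination hSS) ?_ ?_ ?_ ?_
  · unfold Pu Pc; linear_combination h0
  · unfold Pu Pc; linear_combination h1
  · unfold Ps; linear_combination h2 + h3
  · have h6 : 6 * (S ^ 2 * e) = 0 := by linear_combination h3 - h2
    linear_combination (-(S ^ 2 * e)) * hk + 616896000 * k * h6

/-- `S¹⁰` belongs to the Jacobian ideal of `B₆`; in particular every nonzero
`x ∈ ℂ⁴` at which all four partial derivatives of `B₆` vanish satisfies `S(x) = 0`. -/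
theorem S_pow_ten_mem_jacobian_ideal :
    polyS ^ 10 ∈ Ideal.span (Set.range fun i : Fin 4 => pderiv i polyB6) ∧
    ∀ x : Fin 4 → ℂ, x ≠ 0 → (∀ i : Fin 4, eval x (pderiv i polyB6) = 0) →
      eval x polyS = 0 := by
  refine ⟨S_pow_ten_aux, fun x _ hx => ?_⟩
  have hle : Ideal.span (Set.range fun i : Fin 4 => pderiv i polyB6) ≤ RingHom.ker (eval x) := by
    rw [Ideal.span_le]
    rintro _ ⟨i, rfl⟩
    exact hx i
  have h := hle S_pow_ten_aux
  rw [RingHom.mem_ker, map_pow] at h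
  exact pow_eq_zero_iff (by norm_num) |>.1 h
end

section
/- The set of singular points of the sextic surface B₆ = 0 in ℙ³(ℂ) equals the union over all pairs 1 ≤ i < j ≤ 6 of the sets {[x] ∈ ℙ³(ℂ) : Fᵢ(x) = Fⱼ(x) = S(x) = 0}, and this set has exactly 30 elements. -/
open MvPolynomial

/-- The set of singular points of the surface `B₆ = 0` in `ℙ³(ℂ)`. -/
def singB6 : Set (Projectivization ℂ (Fin 4 → ℂ)) :=
  {p | ∃ (x : Fin 4 → ℂ) (hx : x ≠ 0), Projectivization.mk ℂ x hx = p ∧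
      ∀ i : Fin 4, eval x (pderiv i polyB6) = 0}

/-! ### Smoothness of the plane sextic cut out by `y₂ = y₃` -/

/-- The invariant part: with `u = a + b`, `v = a b`, the gradient in `(u, v, c)` has no zeros. -/
lemma key_uvc (u v c : ℂ)
    (h0 : 16*u^3*v + 18*u*v^2 - 30*u^2*v*c + 10*v*c^3 = 0)
    (h1 : 4*u^4 + 18*u^2*v - 33/2*v*c^2 - 10*u^3*c + 10*u*c^3 - 67/16*c^4 - 3*v^2 = 0)
    (h2 : -(33/2)*v^2*c - 10*u^3*v + 30*u*v*c^2 - 67/4*v*c^3 + 3/32*c^5 = 0) :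
    u = 0 ∧ v = 0 ∧ c = 0 := by
  have hu : u ^ 11 = 0 := by
    linear_combination
      ((7268844981746839/1184169590784)*c^6 +
      (423467524892821/8223399936)*v*c^4 +
      (3119357339641217/24670199808)*v^2*c^2 +
      (34097260597933/9251324928)*v^3 +
      (-1658327865287075/148021198848)*u*c^5 +
      (6146004618995/1088391168)*u*v*c^3 +
      (1766323662604945/9251324928)*u*v^2*c +
      (-12683699259541/2055849984)*u^2*c^4 +
      (-232288295307713/2176782336)*u^2*v*c^2 +
      (-8524945305649/1541887488)*u^2*v^2 +
      (44338012226005/4111699968)*u^3*c^3 +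
      (82177491061715/4625662464)*u^3*v*c +
      (-7797/2048)*u^4*c^2 +
      (93/256)*u^4*v +
      (-315/256)*u^5*c +
      (-9/32)*u^6)*h0 +
      ((14665/256)*c^7 +
      (198358010308295/37005299712)*v*c^5 +
      (-517238614636375/4625662464)*v^2*c^3 +
      (-227381427702935/1156415616)*v^3*c +
      (29125/1024)*u*c^6 +
      (22982744198509/1027924992)*u*v*c^4 +
      (11283035634358465/37005299712)*u*v^2*c^2 +
      (34097260597933/1541887488)*u*v^3 +
      (3585/256)*u^2*c^5 +
      (-126891661098535/4111699968)*u^2*v*c^3 +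
      (-164334790022635/2312831232)*u^2*v^2*c +
      (1767/256)*u^3*c^4 +
      (105/32)*u^4*c^3 +
      (25/16)*u^5*c^2 +
      (5/8)*u^6*c +
      (1/4)*u^7)*h1 +
      ((982555/384)*c^6 +
      (480245575855835/9251324928)*v*c^4 +
      (211506926743835/1156415616)*v^2*c^2 +
      (20671038882085/578207808)*v^3 +
      (-2478075/512)*u*c^5 +
      (-261818198090441/4625662464)*u*v*c^3 +
      (193331870515301/1541887488)*u*v^2*c +
      (-924805/384)*u^2*c^4 +
      (-143525182635355/4625662464)*u^2*v*c^2 +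
      (1891189/384)*u^3*c^3)*h2
  have hc : c ^ 11 = 0 := by
    linear_combination
      ((9442317070/9034497)*c^6 +
      (7260747280/1003833)*v*c^4 +
      (276120127520/3011499)*v^2*c^2 +
      (1706536960/531441)*v^3 +
      (-11320605808/9034497)*u*c^5 +
      (193174843456/9034497)*u*v*c^3 +
      (1486863445760/9034497)*u*v^2*c +
      (-1228956160/1003833)*u^2*c^4 +
      (-583859058560/9034497)*u^2*v*c^2 +
      (-853268480/177147)*u^2*v^2 +
      (819171968/1003833)*u^3*c^3 +
      (163848195968/9034497)*u^3*v*c)*h0 +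
      ((1579736096/531441)*v*c^5 +
      (-756751323712/9034497)*v^2*c^3 +
      (-91043746816/531441)*v^3*c +
      (2867894720/1003833)*u*v*c^4 +
      (2253145544960/9034497)*u*v^2*c^2 +
      (3413073920/177147)*u*v^3 +
      (-3276687872/1003833)*u^2*v*c^3 +
      (-655392783872/9034497)*u^2*v^2*c)*h1 +
      ((32/3)*c^6 +
      (209583531712/9034497)*v*c^4 +
      (1417245646208/9034497)*v^2*c^2 +
      (16553408512/531441)*v^3 +
      (-535000906880/9034497)*u*v*c^3 +
      (277195694720/3011499)*u*v^2*c +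
      (130931920256/9034497)*u^2*v*c^2)*h2
  have hu := pow_eq_zero_iff (by norm_num) |>.1 hu
  have hc := pow_eq_zero_iff (by norm_num) |>.1 hc
  subst hu hc
  refine ⟨rfl, ?_, rfl⟩
  have : v ^ 2 = 0 := by linear_combination (-1/3) * h1
  exact pow_eq_zero_iff (by norm_num) |>.1 this

/-- The diagonal part `a = b`. -/
lemma key_diag (a c : ℂ)
    (h0 : 297*a^5 - 200*a^4*c + 30*a^2*c^3 - 33/2*a^3*c^2 - 67/16*a*c^4 = 0)
    (h1 : -(33/2)*a^4*c - 80*a^5 + 60*a^3*c^2 - 67/4*a^2*c^3 + 3/32*c^5 = 0) :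
    a = 0 ∧ c = 0 := by
  have ha : a ^ 9 = 0 := by
    linear_combination
      ((-297761/23514624)*c^4 +
      (-44465/1469664)*a*c^3 +
      (38615623/17635968)*a^2*c^2 +
      (-1584535/551124)*a^3*c +
      (-627427/137781)*a^4)*h0 +
      ((-19949987/35271936)*a*c^3 +
      (850525/314928)*a^2*c^2 +
      (37036735/8817984)*a^3*c +
      (-86335/5103)*a^4)*h1
  have hc : c ^ 9 = 0 := by
    linear_combination
      ((-1993000/45927)*c^4 +
      (-7480090/45927)*a*c^3 +
      (997688960/137781)*a^2*c^2 +
      (-1166943304/137781)*a^3*c +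
      (-1950158080/137781)*a^4)*h0 +
      ((32/3)*c^4 +
      (-267062000/137781)*a*c^3 +
      (167646844/19683)*a^2*c^2 +
      (2036360320/137781)*a^3*c +
      (-268146736/5103)*a^4)*h1
  exact ⟨pow_eq_zero_iff (by norm_num) |>.1 ha, pow_eq_zero_iff (by norm_num) |>.1 hc⟩

/-- The plane sextic `y₂ = y₃` is smooth. -/
lemma plane_smooth (a b e : ℂ)
    (h0 : a * b * ((8 * (a + b) - 10 * (e + e)) * ((a + b) ^ 2 - (e + e) ^ 2) + 2 * (a + b) * (4 * (a + b) ^ 2 + 9 * (a * b) - 10 * (e + e) * (a + b) + 4 * (e + e) ^ 2))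
      + b * (((4 * (a + b) ^ 2 + 9 * (a * b) - 10 * (e + e) * (a + b) + 4 * (e + e) ^ 2) + 9 * (a * b)) * ((a + b) ^ 2 - (e + e) ^ 2))
      - 3 * (a * b - e * e) ^ 2 * b = 0)
    (h1 : a * b * ((8 * (a + b) - 10 * (e + e)) * ((a + b) ^ 2 - (e + e) ^ 2) + 2 * (a + b) * (4 * (a + b) ^ 2 + 9 * (a * b) - 10 * (e + e) * (a + b) + 4 * (e + e) ^ 2))
      + a * (((4 * (a + b) ^ 2 + 9 * (a * b) - 10 * (e + e) * (a + b) + 4 * (e + e) ^ 2) + 9 * (a * b)) * ((a + b) ^ 2 - (e + e) ^ 2))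
      - 3 * (a * b - e * e) ^ 2 * a = 0)
    (h2 : a * b * ((8 * (e + e) - 10 * (a + b)) * ((a + b) ^ 2 - (e + e) ^ 2) - 2 * (e + e) * (4 * (a + b) ^ 2 + 9 * (a * b) - 10 * (e + e) * (a + b) + 4 * (e + e) ^ 2))
      + 3 * (a * b - e * e) ^ 2 * e = 0) :
    a = 0 ∧ b = 0 ∧ e = 0 := by
  by_cases hab : a = b
  · subst hab
    obtain ⟨ha, hc⟩ := key_diag a (2 * e) (by linear_combination h0) (by linear_combination h2)
    refine ⟨ha, ha, ?_⟩
    simpa using hc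
  · have hs : a - b ≠ 0 := sub_ne_zero.2 hab
    obtain ⟨hu, hv, hc⟩ := key_uvc (a + b) (a * b) (2 * e)
      (by apply mul_left_cancel₀ hs; linear_combination a * h0 - b * h1)
      (by apply mul_left_cancel₀ hs; linear_combination h1 - h0) (by linear_combination h2)
    have ha : a ^ 2 = 0 := by linear_combination a * hu - hv
    have hb : b ^ 2 = 0 := by linear_combination b * hu - hv
    exact ⟨pow_eq_zero_iff (by norm_num) |>.1 ha, pow_eq_zero_iff (by norm_num) |>.1 hb,
      by simpa using hc⟩

/-! ### Explicit evaluations -/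

lemma eval_S (x : Fin 4 → ℂ) : eval x polyS = x 0 * x 1 - x 2 * x 3 := by
  simp [polyS]

/-- `q = 4u² + 9v − 10cu + 4c²`, the product `F₃F₄` in invariant coordinates. -/
def qf (x : Fin 4 → ℂ) : ℂ :=
  4 * (x 0 + x 1) ^ 2 + 9 * (x 0 * x 1) - 10 * (x 2 + x 3) * (x 0 + x 1) + 4 * (x 2 + x 3) ^ 2

/-- `w = u² − c²`, the product `F₅F₆` in invariant coordinates. -/
def wf (x : Fin 4 → ℂ) : ℂ := (x 0 + x 1) ^ 2 - (x 2 + x 3) ^ 2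

def pU (x : Fin 4 → ℂ) : ℂ :=
  x 0 * x 1 * ((8 * (x 0 + x 1) - 10 * (x 2 + x 3)) * wf x + 2 * (x 0 + x 1) * qf x)

def pV (x : Fin 4 → ℂ) : ℂ := (qf x + 9 * (x 0 * x 1)) * wf x

def pC (x : Fin 4 → ℂ) : ℂ :=
  x 0 * x 1 * ((8 * (x 2 + x 3) - 10 * (x 0 + x 1)) * wf x - 2 * (x 2 + x 3) * qf x)

lemma prod_eq : (∏ i : Fin 6, polyF i) =
    X 0 * X 1 * (4 * (X 0 + X 1) ^ 2 + 9 * (X 0 * X 1) - 10 * (X 2 + X 3) * (X 0 + X 1)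
      + 4 * (X 2 + X 3) ^ 2) * ((X 0 + X 1) ^ 2 - (X 2 + X 3) ^ 2) := by
  simp only [Fin.prod_univ_six, polyF, Matrix.cons_val]
  ring

lemma eval_prod (x : Fin 4 → ℂ) :
    eval x (∏ i : Fin 6, polyF i) = x 0 * x 1 * qf x * wf x := by
  rw [prod_eq]; simp [qf, wf]

lemma pd_ofNat (i : Fin 4) (n : ℕ) [n.AtLeastTwo] :
    pderiv i (ofNat(n) : MvPolynomial (Fin 4) ℂ) = 0 :=
  (pderiv i).map_natCast n

lemma d0 (x : Fin 4 → ℂ) : eval x (pderiv 0 polyB6) =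
    pU x + x 1 * pV x - 3 * (eval x polyS) ^ 2 * x 1 := by
  rw [polyB6, prod_eq, polyS]
  simp [pderiv_mul, pderiv_pow, pderiv_X, Pi.single_apply, pd_ofNat, pU, pV, qf, wf]
  ring

lemma d1 (x : Fin 4 → ℂ) : eval x (pderiv 1 polyB6) =
    pU x + x 0 * pV x - 3 * (eval x polyS) ^ 2 * x 0 := by
  rw [polyB6, prod_eq, polyS]
  simp [pderiv_mul, pderiv_pow, pderiv_X, Pi.single_apply, pd_ofNat, pU, pV, qf, wf]
  ring

lemma d2 (x : Fin 4 → ℂ) : eval x (pderiv 2 polyB6) =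
    pC x + 3 * (eval x polyS) ^ 2 * x 3 := by
  rw [polyB6, prod_eq, polyS]
  simp [pderiv_mul, pderiv_pow, pderiv_X, Pi.single_apply, pd_ofNat, pC, qf, wf]
  ring

lemma d3 (x : Fin 4 → ℂ) : eval x (pderiv 3 polyB6) =
    pC x + 3 * (eval x polyS) ^ 2 * x 2 := by
  rw [polyB6, prod_eq, polyS]
  simp [pderiv_mul, pderiv_pow, pderiv_X, Pi.single_apply, pd_ofNat, pC, qf, wf]
  ring

/-- A singular point lies on the quadric `S = 0`. -/
lemma sing_S (x : Fin 4 → ℂ) (hx : x ≠ 0) (h : ∀ i : Fin 4, eval x (pderiv i polyB6) = 0) :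
    eval x polyS = 0 := by
  by_contra hS
  have h0 := h 0
  have h1 := h 1
  have h2 := h 2
  have h3 := h 3
  rw [d0] at h0
  rw [d1] at h1
  rw [d2] at h2
  rw [d3] at h3
  have h23 : x 3 = x 2 := by
    have : (eval x polyS) ^ 2 * (x 3 - x 2) = 0 := by linear_combination (h2 - h3) / 3
    rcases mul_eq_zero.1 this with h | h
    · exact absurd (pow_eq_zero_iff (by norm_num) |>.1 h) hS
    · exact sub_eq_zero.1 h
  apply hx
  rw [eval_S] at h0 h1 h2
  simp only [pU, pV, pC, qf, wf, h23] at h0 h1 h2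
  have hz : x 0 = 0 ∧ x 1 = 0 ∧ x 2 = 0 := by
    generalize x 0 = a at *
    generalize x 1 = b at *
    generalize x 2 = e at *
    exact plane_smooth a b e h0 h1 h2
  obtain ⟨z0, z1, z2⟩ := hz
  ext i; fin_cases i <;> simp [z0, z1, z2, h23]

/-! ### The product of linear forms -/

lemma prod_sing (x : Fin 4 → ℂ) (hS : eval x polyS = 0)
    (h : ∀ i : Fin 4, eval x (pderiv i polyB6) = 0) :
    ∃ i j : Fin 6, i < j ∧ eval x (polyF i) = 0 ∧ eval x (polyF j) = 0 := by
  have hP : eval x (∏ i : Fin 6, polyF i) = 0 := by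
    have h0 := h 0
    have h1 := h 1
    have h2 := h 2
    have h3 := h 3
    rw [d0, hS] at h0
    rw [d1, hS] at h1
    rw [d2, hS] at h2
    rw [d3, hS] at h3
    rw [eval_prod]
    simp only [pU, pV, pC] at h0 h1 h2 h3
    have e : 6 * (x 0 * x 1 * qf x * wf x) = 0 := by
      have hq : 4 * (x 0 + x 1) ^ 2 + 9 * (x 0 * x 1) - 10 * (x 2 + x 3) * (x 0 + x 1)
        + 4 * (x 2 + x 3) ^ 2 = qf x := rfl
      have hw : (x 0 + x 1) ^ 2 - (x 2 + x 3) ^ 2 = wf x := rfl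
      linear_combination x 0 * h0 + x 1 * h1 + x 2 * h2 + x 3 * h3
        - 2 * x 0 * x 1 * wf x * hq - 2 * x 0 * x 1 * qf x * hw
    simpa using e
  rw [map_prod, Finset.prod_eq_zero_iff] at hP
  obtain ⟨i, -, hi⟩ := hP
  have hm : ∃ m : Fin 4, eval x (pderiv m (polyF i)) ≠ 0 := by
    fin_cases i
    · exact ⟨0, by simp [polyF, pderiv_mul, pderiv_X, pd_ofNat, Pi.single_apply]⟩
    · exact ⟨1, by simp [polyF, pderiv_mul, pderiv_X, pd_ofNat, Pi.single_apply]⟩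
    · exact ⟨1, by simp [polyF, pderiv_mul, pderiv_X, pd_ofNat, Pi.single_apply]⟩
    · exact ⟨0, by simp [polyF, pderiv_mul, pderiv_X, pd_ofNat, Pi.single_apply]⟩
    · exact ⟨0, by simp [polyF, pderiv_mul, pderiv_X, pd_ofNat, Pi.single_apply]⟩
    · exact ⟨0, by simp [polyF, pderiv_mul, pderiv_X, pd_ofNat, Pi.single_apply]⟩
  obtain ⟨m, hm⟩ := hm
  have hd := h m
  rw [polyB6, ← Finset.mul_prod_erase Finset.univ polyF (Finset.mem_univ i)] at hd
  simp only [map_sub, pderiv_mul, pderiv_pow, map_add, map_mul, map_pow, hi, hS] at hd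
  have h' : eval x (∏ k ∈ Finset.univ.erase i, polyF k) = 0 := by
    simpa [hm] using hd
  rw [map_prod, Finset.prod_eq_zero_iff] at h'
  obtain ⟨j, hj, hj0⟩ := h'
  have hne : j ≠ i := Finset.ne_of_mem_erase hj
  rcases lt_or_gt_of_ne hne with hlt | hlt
  · exact ⟨j, i, hlt, hj0, hi⟩
  · exact ⟨i, j, hlt, hi, hj0⟩

lemma sing_of (x : Fin 4 → ℂ) (i j : Fin 6) (hij : i < j) (hi : eval x (polyF i) = 0)
    (hj : eval x (polyF j) = 0) (hS : eval x polyS = 0) (m : Fin 4) :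
    eval x (pderiv m polyB6) = 0 := by
  rw [polyB6, ← Finset.mul_prod_erase Finset.univ polyF (Finset.mem_univ i),
    ← Finset.mul_prod_erase (Finset.univ.erase i) polyF
      (Finset.mem_erase.2 ⟨hij.ne', Finset.mem_univ j⟩)]
  simp [pderiv_mul, pderiv_pow, hi, hj, hS]

/-! ### The thirty points -/

/-- First coordinates of the six points of `ℙ¹`. -/
def sZ : Fin 6 → ℤ := ![0, 1, 1, 2, 1, 1]

/-- Second coordinates of the six points of `ℙ¹`. -/
def tZ : Fin 6 → ℤ := ![1, 0, 2, 1, -1, 1]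

lemma st_inj : ∀ i k : Fin 6, sZ i * tZ k - tZ i * sZ k = 0 → i = k := by decide

lemma st_ne : ∀ i : Fin 6, sZ i ≠ 0 ∨ tZ i ≠ 0 := by decide

lemma eval_F (i : Fin 6) (s t s' t' : ℂ) :
    eval ![s * s', t * t', s * t', t * s'] (polyF i) =
      (tZ i * s - sZ i * t) * (tZ i * s' - sZ i * t') := by
  fin_cases i <;> simp [polyF, sZ, tZ] <;> ring

/-- The Segre point attached to an ordered pair of indices. -/
def qpt (k : Fin 6 × Fin 6) : Fin 4 → ℂ :=
  ![sZ k.1 * sZ k.2, tZ k.1 * tZ k.2, sZ k.1 * tZ k.2, tZ k.1 * sZ k.2]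

lemma qpt_ne (k : Fin 6 × Fin 6) : qpt k ≠ 0 := by
  intro h
  have e0 := congrFun h 0
  have e1 := congrFun h 1
  have e2 := congrFun h 2
  have e3 := congrFun h 3
  simp only [qpt, Matrix.cons_val, Pi.zero_apply, mul_eq_zero, Int.cast_eq_zero] at e0 e1 e2 e3
  have a := st_ne k.1
  have b := st_ne k.2
  tauto

/-- The thirty points of projective space. -/
noncomputable def ppt (k : Fin 6 × Fin 6) : Projectivization ℂ (Fin 4 → ℂ) :=
  Projectivization.mk ℂ (qpt k) (qpt_ne k)

lemma ppt_inj : Function.Injective ppt := by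
  intro k l h
  obtain ⟨r, hr⟩ := (Projectivization.mk_eq_mk_iff' ℂ _ _ _ _).1 h
  have e0 := congrFun hr 0
  have e1 := congrFun hr 1
  have e2 := congrFun hr 2
  have e3 := congrFun hr 3
  simp only [qpt, Matrix.cons_val, Pi.smul_apply, smul_eq_mul] at e0 e1 e2 e3
  have c1 : ((sZ k.1 : ℂ) * tZ l.1 - tZ k.1 * sZ l.1) = 0 := by
    rcases st_ne k.2 with hn | hn
    · have hn' : (sZ k.2 : ℂ) ≠ 0 := by exact_mod_cast hn
      apply mul_right_cancel₀ hn'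
      linear_combination (sZ l.1 : ℂ) * e3 - tZ l.1 * e0
    · have hn' : (tZ k.2 : ℂ) ≠ 0 := by exact_mod_cast hn
      apply mul_right_cancel₀ hn'
      linear_combination (sZ l.1 : ℂ) * e1 - tZ l.1 * e2
  have c2 : ((sZ k.2 : ℂ) * tZ l.2 - tZ k.2 * sZ l.2) = 0 := by
    rcases st_ne k.1 with hn | hn
    · have hn' : (sZ k.1 : ℂ) ≠ 0 := by exact_mod_cast hn
      apply mul_right_cancel₀ hn'
      linear_combination (sZ l.2 : ℂ) * e2 - tZ l.2 * e0
    · have hn' : (tZ k.1 : ℂ) ≠ 0 := by exact_mod_cast hn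
      apply mul_right_cancel₀ hn'
      linear_combination (sZ l.2 : ℂ) * e1 - tZ l.2 * e3
  exact Prod.ext (st_inj _ _ (by exact_mod_cast c1)) (st_inj _ _ (by exact_mod_cast c2))

/-- Points of the quadric are Segre products. -/
lemma segre (x : Fin 4 → ℂ) (hS : x 0 * x 1 - x 2 * x 3 = 0) :
    ∃ s t s' t' : ℂ, x = ![s * s', t * t', s * t', t * s'] := by
  by_cases h0 : x 0 = 0
  · rw [h0] at hS
    have : x 2 * x 3 = 0 := by linear_combination -hS
    rcases mul_eq_zero.1 this with h | h
    · refine ⟨0, 1, x 3, x 1, ?_⟩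
      ext i; fin_cases i <;> simp [h0, h]
    · refine ⟨x 2, x 1, 0, 1, ?_⟩
      ext i; fin_cases i <;> simp [h0, h]
  · refine ⟨1, x 3 / x 0, x 0, x 2, ?_⟩
    ext i; fin_cases i
    · simp
    · simp; field_simp; linear_combination hS
    · simp
    · simp; field_simp

lemma root_mul (i : Fin 6) (s t : ℂ) (h : tZ i * s - sZ i * t = 0) :
    ∃ r : ℂ, s = r * sZ i ∧ t = r * tZ i := by
  rcases st_ne i with hn | hn
  · have hn' : (sZ i : ℂ) ≠ 0 := by exact_mod_cast hn
    refine ⟨s / sZ i, by field_simp, ?_⟩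
    field_simp; linear_combination -h
  · have hn' : (tZ i : ℂ) ≠ 0 := by exact_mod_cast hn
    refine ⟨t / tZ i, ?_, by field_simp⟩
    field_simp; linear_combination h

lemma root_two (i j : Fin 6) (hij : i ≠ j) (s t : ℂ) (h : tZ i * s - sZ i * t = 0)
    (h' : tZ j * s - sZ j * t = 0) : s = 0 ∧ t = 0 := by
  have hn : ((sZ i : ℂ) * tZ j - tZ i * sZ j) ≠ 0 := by
    intro e
    exact hij (st_inj i j (by exact_mod_cast e))
  constructor
  · apply mul_left_cancel₀ hn
    linear_combination sZ i * h' - sZ j * h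
  · apply mul_left_cancel₀ hn
    linear_combination tZ i * h' - tZ j * h

lemma mk_eq_ppt (i j : Fin 6) (x : Fin 4 → ℂ) (hx : x ≠ 0) (s t s' t' : ℂ)
    (e : x = ![s * s', t * t', s * t', t * s'])
    (h : tZ i * s - sZ i * t = 0) (h' : tZ j * s' - sZ j * t' = 0) :
    Projectivization.mk ℂ x hx = ppt (i, j) := by
  obtain ⟨r, rfl, rfl⟩ := root_mul i s t h
  obtain ⟨r', rfl, rfl⟩ := root_mul j s' t' h'
  refine (Projectivization.mk_eq_mk_iff' ℂ _ _ _ _).2 ⟨r * r', ?_⟩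
  rw [e]
  ext m; fin_cases m <;> simp [qpt] <;> ring

lemma point_of (i j : Fin 6) (hij : i ≠ j) (x : Fin 4 → ℂ) (hx : x ≠ 0)
    (hi : eval x (polyF i) = 0) (hj : eval x (polyF j) = 0) (hS : eval x polyS = 0) :
    Projectivization.mk ℂ x hx = ppt (i, j) ∨ Projectivization.mk ℂ x hx = ppt (j, i) := by
  rw [eval_S] at hS
  obtain ⟨s, t, s', t', e⟩ := segre x hS
  rw [e, eval_F] at hi hj
  rcases mul_eq_zero.1 hi with h1 | h1 <;> rcases mul_eq_zero.1 hj with h2 | h2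
  · obtain ⟨rfl, rfl⟩ := root_two i j hij _ _ h1 h2
    exact absurd (by rw [e]; ext m; fin_cases m <;> simp) hx
  · exact Or.inl (mk_eq_ppt i j x hx s t s' t' e h1 h2)
  · exact Or.inr (mk_eq_ppt j i x hx s t s' t' e h2 h1)
  · obtain ⟨rfl, rfl⟩ := root_two i j hij _ _ h1 h2
    exact absurd (by rw [e]; ext m; fin_cases m <;> simp) hx

lemma qpt_F (k : Fin 6 × Fin 6) (i : Fin 6) (h : i = k.1 ∨ i = k.2) :
    eval (qpt k) (polyF i) = 0 := by
  rw [qpt, eval_F]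
  rcases h with rfl | rfl <;> ring

lemma qpt_S (k : Fin 6 × Fin 6) : eval (qpt k) polyS = 0 := by
  rw [eval_S]
  simp only [qpt, Matrix.cons_val]
  ring

lemma sing_eq_union :
    singB6 = (⋃ (i : Fin 6) (j : Fin 6) (_ : i < j),
      {p : Projectivization ℂ (Fin 4 → ℂ) |
        ∃ (x : Fin 4 → ℂ) (hx : x ≠ 0), Projectivization.mk ℂ x hx = p ∧
          eval x (polyF i) = 0 ∧ eval x (polyF j) = 0 ∧ eval x polyS = 0}) := by
  ext p
  simp only [Set.mem_iUnion, singB6, Set.mem_setOf_eq]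
  constructor
  · rintro ⟨x, hx, rfl, h⟩
    have hS := sing_S x hx h
    obtain ⟨i, j, hij, hi, hj⟩ := prod_sing x hS h
    exact ⟨i, j, hij, x, hx, rfl, hi, hj, hS⟩
  · rintro ⟨i, j, hij, x, hx, rfl, hi, hj, hS⟩
    exact ⟨x, hx, rfl, fun m => sing_of x i j hij hi hj hS m⟩

lemma sing_eq_image :
    singB6 = Set.image ppt (((Finset.univ : Finset (Fin 6 × Fin 6)).filter
      (fun k => k.1 ≠ k.2) : Finset (Fin 6 × Fin 6)) : Set (Fin 6 × Fin 6)) := by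
  rw [sing_eq_union]
  ext p
  simp only [Set.mem_iUnion, Set.mem_setOf_eq, Set.mem_image, Finset.mem_coe, Finset.mem_filter,
    Finset.mem_univ, true_and]
  constructor
  · rintro ⟨i, j, hij, x, hx, rfl, hi, hj, hS⟩
    rcases point_of i j hij.ne x hx hi hj hS with h | h
    · exact ⟨(i, j), hij.ne, h.symm⟩
    · exact ⟨(j, i), hij.ne', h.symm⟩
  · rintro ⟨k, hk, rfl⟩
    rcases lt_or_gt_of_ne hk with hlt | hlt
    · exact ⟨k.1, k.2, hlt, qpt k, qpt_ne k, rfl, qpt_F k _ (Or.inl rfl), qpt_F k _ (Or.inr rfl),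
        qpt_S k⟩
    · exact ⟨k.2, k.1, hlt, qpt k, qpt_ne k, rfl, qpt_F k _ (Or.inr rfl), qpt_F k _ (Or.inl rfl),
        qpt_S k⟩

/-- The singular locus of the sextic `B₆ = 0` is exactly the union over pairs
`i < j` of the sets `{Fᵢ = Fⱼ = S = 0}`, and it consists of exactly `30` points. -/
theorem singB6_eq_union_and_card :
    singB6 = (⋃ (i : Fin 6) (j : Fin 6) (_ : i < j),
      {p : Projectivization ℂ (Fin 4 → ℂ) |
        ∃ (x : Fin 4 → ℂ) (hx : x ≠ 0), Projectivization.mk ℂ x hx = p ∧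
          eval x (polyF i) = 0 ∧ eval x (polyF j) = 0 ∧ eval x polyS = 0}) ∧
    singB6.ncard = 30 := by
  refine ⟨sing_eq_union, ?_⟩
  rw [sing_eq_image, Set.ncard_image_of_injective _ ppt_inj, Set.ncard_coe_finset]
  decide
end

section
/- The complex vector space of homogeneous polynomials g of degree 6 in ℂ[y₀,y₁,y₂,y₃] satisfying, for every pair 1 ≤ i < j ≤ 6 and every x ∈ ℂ⁴∖{0} with Fᵢ(x) = Fⱼ(x) = S(x) = 0, both g(x) = 0 and Σₜ (∂g/∂yₜ)(x)·wₜ = 0 for every w ∈ ℂ⁴ with Fᵢ(w) = Fⱼ(w) = 0, has dimension 29 (equivalently, these conditions at the 30 cusps have rank exactly 55 on the 84-dimensional space of sextic forms). -/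
open MvPolynomial

/-- The linear functional `g ↦ Σₜ (∂g/∂yₜ)(x)·wₜ` (the differential of `g` at `x`
evaluated on the vector `w`). -/
noncomputable def dirDeriv (x w : Fin 4 → ℂ) : MvPolynomial (Fin 4) ℂ →ₗ[ℂ] ℂ :=
  ∑ t : Fin 4, w t •
    ((aeval x : MvPolynomial (Fin 4) ℂ →ₐ[ℂ] ℂ).toLinearMap ∘ₗ
      (pderiv t : Derivation ℂ (MvPolynomial (Fin 4) ℂ) (MvPolynomial (Fin 4) ℂ)).toLinearMap)

/-- The space of homogeneous sextic forms `g` which vanish at every cusp of `B₆ = 0`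
(the points with `Fᵢ = Fⱼ = S = 0`, `i < j`) and whose differential at each such cusp
vanishes on the `2`-plane `Fᵢ = Fⱼ = 0`. -/
noncomputable def sexticsAdaptedToCusps : Submodule ℂ (MvPolynomial (Fin 4) ℂ) :=
  homogeneousSubmodule (Fin 4) ℂ 6 ⊓
    ⨅ (i : Fin 6) (j : Fin 6) (_ : i < j) (x : Fin 4 → ℂ)
      (_ : x ≠ 0 ∧ eval x (polyF i) = 0 ∧ eval x (polyF j) = 0 ∧ eval x polyS = 0),
      (LinearMap.ker (aeval x : MvPolynomial (Fin 4) ℂ →ₐ[ℂ] ℂ).toLinearMap ⊓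
        ⨅ (w : Fin 4 → ℂ) (_ : eval w (polyF i) = 0 ∧ eval w (polyF j) = 0),
          LinearMap.ker (dirDeriv x w))


namespace Cusp

lemma mem_W (g : MvPolynomial (Fin 4) ℂ) : g ∈ sexticsAdaptedToCusps ↔ g.IsHomogeneous 6 ∧
    ∀ i j : Fin 6, i < j → ∀ x : Fin 4 → ℂ, x ≠ 0 → eval x (polyF i) = 0 → eval x (polyF j) = 0 →
      eval x polyS = 0 → eval x g = 0 ∧ ∀ w : Fin 4 → ℂ, eval w (polyF i) = 0 →
        eval w (polyF j) = 0 → dirDeriv x w g = 0 := by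
  simp only [sexticsAdaptedToCusps, Submodule.mem_inf, Submodule.mem_iInf, LinearMap.mem_ker,
    mem_homogeneousSubmodule, and_imp, AlgHom.toLinearMap_apply]
  rfl

lemma dirDeriv_apply (x w : Fin 4 → ℂ) (p : MvPolynomial (Fin 4) ℂ) :
    dirDeriv x w p = ∑ t, w t * eval x (pderiv t p) := by
  simp [dirDeriv]

lemma dirDeriv_mul (x w : Fin 4 → ℂ) (p q : MvPolynomial (Fin 4) ℂ) :
    dirDeriv x w (p * q) = eval x p * dirDeriv x w q + eval x q * dirDeriv x w p := by
  simp only [dirDeriv_apply, Derivation.leibniz, smul_eq_mul, map_add, map_mul, Finset.mul_sum,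
    ← Finset.sum_add_distrib]
  exact Finset.sum_congr rfl fun t _ => by ring

/-- Homogeneous coordinates of the six tangency parameters. -/
noncomputable def ca : Fin 6 → ℂ := ![0, 1, 1, 2, 1, 1]
noncomputable def cb : Fin 6 → ℂ := ![1, 0, 2, 1, -1, 1]

/-- The Segre point. -/
noncomputable def pt (a b a' b' : ℂ) : Fin 4 → ℂ := ![a * a', b * b', b * a', a * b']

lemma dirDeriv_F (x w : Fin 4 → ℂ) (k : Fin 6) : dirDeriv x w (polyF k) = eval w (polyF k) := by
  have h2 : (2 : MvPolynomial (Fin 4) ℂ) = C 2 := (map_ofNat C 2).symm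
  have h4 : (4 : MvPolynomial (Fin 4) ℂ) = C 4 := (map_ofNat C 4).symm
  fin_cases k <;> simp [polyF, dirDeriv_apply, Fin.sum_univ_four, pderiv_X, h2, h4, Pi.single_apply] <;> ring

lemma dirDeriv_S (x w : Fin 4 → ℂ) : dirDeriv x w polyS =
    x 0 * w 1 + x 1 * w 0 - x 2 * w 3 - x 3 * w 2 := by
  simp [polyS, dirDeriv_apply, Fin.sum_univ_four, pderiv_X, Pi.single_apply]; ring

lemma eval_F (k : Fin 6) (a b a' b' : ℂ) : eval (pt a b a' b') (polyF k) =
    (ca k * b - cb k * a) * (ca k * b' - cb k * a') := by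
  fin_cases k <;> simp [polyF, pt, ca, cb] <;> ring

lemma br_ne (i j : Fin 6) (h : i ≠ j) : ca i * cb j - cb i * ca j ≠ 0 := by
  fin_cases i <;> fin_cases j <;> simp [ca, cb] at h ⊢ <;> norm_num

lemma br3_ne (i : Fin 6) : ca i * 3 - cb i * 1 ≠ 0 := by
  fin_cases i <;> simp [ca, cb] <;> norm_num

lemma br4_ne (i : Fin 6) : ca i * 4 - cb i * 1 ≠ 0 := by
  fin_cases i <;> simp [ca, cb] <;> norm_num

lemma eval_S (a b a' b' : ℂ) : eval (pt a b a' b') polyS = 0 := by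
  simp [polyS, pt]; ring

/-- The plane tangent at the parameter `τ`. -/
noncomputable def G (τ : ℂ) : MvPolynomial (Fin 4) ℂ :=
  C (τ ^ 2) * X 0 - C τ * X 2 - C τ * X 3 + X 1
noncomputable def d : MvPolynomial (Fin 4) ℂ := X 2 - X 3

lemma eval_G (τ a b a' b' : ℂ) : eval (pt a b a' b') (G τ) = (b - τ * a) * (b' - τ * a') := by
  simp [G, pt]; ring

lemma eval_d (a b a' b' : ℂ) : eval (pt a b a' b') d = b * a' - a * b' := by
  simp [d, pt]

lemma hom_F (k : Fin 6) : (polyF k).IsHomogeneous 1 := by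
  have h2 : (2 : MvPolynomial (Fin 4) ℂ) = C 2 := (map_ofNat C 2).symm
  have h4 : (4 : MvPolynomial (Fin 4) ℂ) = C 4 := (map_ofNat C 4).symm
  have hX : ∀ i : Fin 4, (X i : MvPolynomial (Fin 4) ℂ).IsHomogeneous 1 := isHomogeneous_X ℂ
  have hC : ∀ (c : ℂ) (i : Fin 4), (C c * X i : MvPolynomial (Fin 4) ℂ).IsHomogeneous 1 :=
    fun c i => (hX i).C_mul c
  fin_cases k <;> simp only [polyF, h2, h4]
  · exact hX 0
  · exact hX 1
  · exact (((hC _ _).sub (hC _ _)).sub (hC _ _)).add (hX _)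
  · exact (((hX _).sub (hC _ _)).sub (hC _ _)).add (hC _ _)
  · exact (((hX _).add (hX _)).add (hX _)).add (hX _)
  · exact (((hX _).sub (hX _)).sub (hX _)).add (hX _)

lemma hom_S : polyS.IsHomogeneous 2 :=
  ((isHomogeneous_X ℂ _).mul (isHomogeneous_X ℂ _)).sub
    ((isHomogeneous_X ℂ _).mul (isHomogeneous_X ℂ _))

lemma hom_G (τ : ℂ) : (G τ).IsHomogeneous 1 := by
  have hC : ∀ (c : ℂ) (i : Fin 4), (C c * X i : MvPolynomial (Fin 4) ℂ).IsHomogeneous 1 :=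
    fun c i => (isHomogeneous_X ℂ i).C_mul c
  exact (((hC _ _).sub (hC _ _)).sub (hC _ _)).add (isHomogeneous_X ℂ _)

lemma hom_d : d.IsHomogeneous 1 := (isHomogeneous_X ℂ _).sub (isHomogeneous_X ℂ _)

lemma hom_prod (s : Finset (Fin 6)) : (∏ k ∈ s, polyF k).IsHomogeneous s.card := by
  simpa using IsHomogeneous.prod s polyF (fun _ => 1) (fun i _ => hom_F i)

lemma finrank_hom (n N : ℕ)
    (h : (Finset.Nat.antidiagonalTuple 4 n).card = N) :
    Module.finrank ℂ (homogeneousSubmodule (Fin 4) ℂ n) = N := by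
  have e1 : homogeneousSubmodule (Fin 4) ℂ n = AddMonoidAlgebra.supported ℂ ℂ {d | d.degree = n} :=
    homogeneousSubmodule_eq_finsupp_supported _ _ _
  have e := AddMonoidAlgebra.supportedEquivFinsupp (R := ℂ) (S := ℂ) {d : Fin 4 →₀ ℕ | d.degree = n}
  let f : {d : Fin 4 →₀ ℕ | d.degree = n} ≃ Finset.Nat.antidiagonalTuple 4 n :=
    Finsupp.equivFunOnFinite.subtypeEquiv (fun a => by
      simp [Finset.Nat.mem_antidiagonalTuple, Finsupp.degree_eq_sum])
  have : Fintype {d : Fin 4 →₀ ℕ | d.degree = n} := Fintype.ofEquiv _ f.symm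
  rw [← h, e1]
  refine (LinearEquiv.finrank_eq e).trans ?_
  rw [Module.finrank_finsupp_self, Fintype.card_congr f, Fintype.card_coe]

lemma finrank_hom6 : Module.finrank ℂ (homogeneousSubmodule (Fin 4) ℂ 6) = 84 :=
  finrank_hom 6 84 (by decide)

lemma finrank_hom2 : Module.finrank ℂ (homogeneousSubmodule (Fin 4) ℂ 2) = 10 :=
  finrank_hom 2 10 (by decide)

instance : Module.Finite ℂ (homogeneousSubmodule (Fin 4) ℂ 6) :=
  Module.finite_of_finrank_pos (by rw [finrank_hom6]; norm_num)
instance : Module.Finite ℂ (homogeneousSubmodule (Fin 4) ℂ 2) :=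
  Module.finite_of_finrank_pos (by rw [finrank_hom2]; norm_num)

/-- The cusp attached to an ordered pair of indices. -/
noncomputable def P (m n : Fin 6) : Fin 4 → ℂ := pt (ca m) (cb m) (ca n) (cb n)

lemma eval_FP (k m n : Fin 6) : eval (P m n) (polyF k) =
    (ca k * cb m - cb k * ca m) * (ca k * cb n - cb k * ca n) := eval_F _ _ _ _ _

lemma eval_prod_symm (s : Finset (Fin 6)) (m n : Fin 6) :
    eval (P m n) (∏ k ∈ s, polyF k) = eval (P n m) (∏ k ∈ s, polyF k) := by
  simp only [map_prod, eval_FP]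
  exact Finset.prod_congr rfl fun k _ => mul_comm _ _

lemma eval_prod_zero (s : Finset (Fin 6)) (m n : Fin 6) (h : m ∈ s ∨ n ∈ s) :
    eval (P m n) (∏ k ∈ s, polyF k) = 0 := by
  rw [map_prod]
  rcases h with h | h
  · exact Finset.prod_eq_zero h (by rw [eval_FP]; ring)
  · exact Finset.prod_eq_zero h (by rw [eval_FP]; ring)

lemma eval_prod_ne (s : Finset (Fin 6)) (m n : Fin 6) (h : m ∉ s) (h' : n ∉ s) :
    eval (P m n) (∏ k ∈ s, polyF k) ≠ 0 := by
  rw [map_prod]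
  refine Finset.prod_ne_zero_iff.2 fun k hk => ?_
  rw [eval_FP]
  exact mul_ne_zero (br_ne _ _ fun e => h (e ▸ hk)) (br_ne _ _ fun e => h' (e ▸ hk))

lemma eval_dP (m n : Fin 6) : eval (P m n) d = ca n * cb m - cb n * ca m := by
  rw [P, eval_d]; ring

lemma eval_SP (m n : Fin 6) : eval (P m n) polyS = 0 := eval_S _ _ _ _

lemma P_ne (m n : Fin 6) (h : m ≠ n) : P m n ≠ 0 := by
  intro e
  apply br_ne n m h.symm
  rw [← eval_dP, e]
  simp [d]

lemma dirDeriv_SP (m n : Fin 6) :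
    dirDeriv (P m n) (P n m) polyS = -(ca n * cb m - cb n * ca m) ^ 2 := by
  rw [dirDeriv_S]; simp [P, pt]; ring

lemma W_cond (g : MvPolynomial (Fin 4) ℂ) (hg : g ∈ sexticsAdaptedToCusps) (m n : Fin 6)
    (h : m ≠ n) : eval (P m n) g = 0 ∧ dirDeriv (P m n) (P n m) g = 0 := by
  rw [mem_W] at hg
  have z1 : ∀ m n, eval (P m n) (polyF m) = 0 := fun m n => by rw [eval_FP]; ring
  have z2 : ∀ m n, eval (P m n) (polyF n) = 0 := fun m n => by rw [eval_FP]; ring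
  rcases lt_or_gt_of_ne h with h' | h'
  · obtain ⟨h1, h2⟩ := hg.2 m n h' (P m n) (P_ne _ _ h) (z1 _ _) (z2 _ _) (eval_SP _ _)
    exact ⟨h1, h2 _ (z2 _ _) (z1 _ _)⟩
  · obtain ⟨h1, h2⟩ := hg.2 n m h' (P m n) (P_ne _ _ h) (z2 _ _) (z1 _ _) (eval_SP _ _)
    exact ⟨h1, h2 _ (z1 _ _) (z2 _ _)⟩

/-! ### Upper bound -/

abbrev T1 := {p : Fin 6 × Fin 6 // p.1 < p.2}
abbrev T2 := {p : Fin 6 × Fin 6 // p.1 < p.2 ∧ p.2 < 5}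

def s1 (p : Fin 6 × Fin 6) : Finset (Fin 6) := (Finset.univ.erase p.1).erase p.2
def s2 (p : Fin 6 × Fin 6) : Finset (Fin 6) := (s1 p).erase 5

noncomputable def Q1 (p : Fin 6 × Fin 6) : MvPolynomial (Fin 4) ℂ := ∏ k ∈ s1 p, polyF k
noncomputable def Q2 (p : Fin 6 × Fin 6) : MvPolynomial (Fin 4) ℂ := ∏ k ∈ s2 p, polyF k

lemma hom_Q1 (p : T1) : (Q1 p.1).IsHomogeneous 4 := by
  have : (s1 p.1).card = 4 := by
    revert p; decide
  have h := hom_prod (s1 p.1)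
  rw [this] at h
  exact h

lemma hom_Q2 (p : T2) : (Q2 p.1).IsHomogeneous 3 := by
  have : (s2 p.1).card = 3 := by
    revert p; decide
  exact this ▸ hom_prod (s2 p.1)

lemma Q1_ne (m n : Fin 6) : eval (P m n) (Q1 (m, n)) ≠ 0 :=
  eval_prod_ne _ _ _ (by simp [s1]) (by simp [s1])

lemma Q2_ne (m n : Fin 6) : eval (P m n) (Q2 (m, n)) ≠ 0 :=
  eval_prod_ne _ _ _ (by simp [s1, s2]) (by simp [s1, s2])

lemma Q1_zero (q p : T1) (h : p ≠ q) : eval (P q.1.1 q.1.2) (Q1 p.1) = 0 := by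
  apply eval_prod_zero
  obtain ⟨⟨m, n⟩, h1⟩ := q
  obtain ⟨⟨i, j⟩, h2⟩ := p
  simp only [s1, Finset.mem_erase, Finset.mem_univ, ne_eq, Subtype.mk.injEq, Prod.mk.injEq] at *
  grind

lemma Q2_zero (q p : T2) (h : p ≠ q) : eval (P q.1.1 q.1.2) (Q2 p.1) = 0 := by
  apply eval_prod_zero
  obtain ⟨⟨m, n⟩, h1⟩ := q
  obtain ⟨⟨i, j⟩, h2⟩ := p
  simp only [s1, s2, Finset.mem_erase, Finset.mem_univ, ne_eq, Subtype.mk.injEq, Prod.mk.injEq] at *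
  grind

/-- The 55 complementary sextics. -/
noncomputable def v : T1 ⊕ T1 ⊕ T1 ⊕ T2 → MvPolynomial (Fin 4) ℂ :=
  Sum.elim (fun p => polyS * Q1 p.1) <| Sum.elim (fun p => d * d * Q1 p.1) <|
    Sum.elim (fun p => d * G 3 * Q1 p.1) (fun p => polyS * (d * Q2 p.1))

lemma hom_v (i) : (v i).IsHomogeneous 6 := by
  rcases i with p | p | p | p
  · exact hom_S.mul (hom_Q1 p)
  · exact (hom_d.mul hom_d).mul (hom_Q1 p)
  · exact (hom_d.mul (hom_G 3)).mul (hom_Q1 p)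
  · exact hom_S.mul (hom_d.mul (hom_Q2 p))

lemma G3_ne (m n : Fin 6) : eval (P m n) (G 3) ≠ 0 := by
  rw [P, eval_G]
  have h1 := br3_ne m
  have h2 := br3_ne n
  intro h
  rcases mul_eq_zero.1 h with h | h
  · exact h1 (by linear_combination -h)
  · exact h2 (by linear_combination -h)

lemma G3_symm (m n : Fin 6) : eval (P n m) (G 3) = eval (P m n) (G 3) := by
  rw [P, eval_G, P, eval_G]; ring

lemma v_indep (c : T1 ⊕ T1 ⊕ T1 ⊕ T2 → ℂ) (h : ∑ i, c i • v i ∈ sexticsAdaptedToCusps) :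
    c = 0 := by
  have ev : ∀ q : T1, ∀ m n, (m = q.1.1 ∧ n = q.1.2 ∨ m = q.1.2 ∧ n = q.1.1) → ∀ p, p ≠ q →
      eval (P m n) (Q1 p.1) = 0 := by
    rintro q m n (⟨rfl, rfl⟩ | ⟨rfl, rfl⟩) p hp
    · exact Q1_zero q p hp
    · rw [Q1, eval_prod_symm]; exact Q1_zero q p hp
  have key : ∀ q : T1, c (.inr (.inl q)) = 0 ∧ c (.inr (.inr (.inl q))) = 0 := by
    intro q
    have E : ∀ m n, (m = q.1.1 ∧ n = q.1.2 ∨ m = q.1.2 ∧ n = q.1.1) →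
        c (.inr (.inl q)) * (eval (P m n) d * eval (P m n) d * eval (P m n) (Q1 q.1)) +
        c (.inr (.inr (.inl q))) * (eval (P m n) d * eval (P m n) (G 3) * eval (P m n) (Q1 q.1))
          = 0 := by
      intro m n hmn
      have hne : m ≠ n := by
        have := q.2.ne
        rcases hmn with ⟨rfl, rfl⟩ | ⟨rfl, rfl⟩
        · exact this
        · exact this.symm
      have := (W_cond _ h m n hne).1
      simp only [Fintype.sum_sum_type, v, Sum.elim_inl, Sum.elim_inr, map_add, map_sum, smul_eval,
        map_mul, eval_SP, zero_mul, mul_zero, Finset.sum_const_zero, zero_add, add_zero] at this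
      rw [Finset.sum_eq_single q, Finset.sum_eq_single q] at this
      · exact this
      · intro p _ hp; rw [ev q m n hmn p hp]; ring
      · simp
      · intro p _ hp; rw [ev q m n hmn p hp]; ring
      · simp
    have e1 := E _ _ (.inl ⟨rfl, rfl⟩)
    have e2 := E _ _ (.inr ⟨rfl, rfl⟩)
    have hs : eval (P q.1.2 q.1.1) (Q1 q.1) = eval (P q.1.1 q.1.2) (Q1 q.1) := eval_prod_symm _ _ _
    rw [hs, G3_symm] at e2
    have hd : eval (P q.1.2 q.1.1) d = - eval (P q.1.1 q.1.2) d := by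
      rw [eval_dP, eval_dP]; ring
    rw [hd] at e2
    have hf := Q1_ne q.1.1 q.1.2
    have hd0 : eval (P q.1.1 q.1.2) d ≠ 0 := by
      rw [eval_dP]; exact br_ne _ _ q.2.ne'
    have hl := G3_ne q.1.1 q.1.2
    constructor
    · have : c (.inr (.inl q)) * (eval (P q.1.1 q.1.2) d * eval (P q.1.1 q.1.2) d *
        eval (P q.1.1 q.1.2) (Q1 q.1)) = 0 := by linear_combination (e1 + e2) / 2
      exact (mul_eq_zero.1 this).resolve_right (mul_ne_zero (mul_ne_zero hd0 hd0) hf)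
    · have : c (.inr (.inr (.inl q))) * (eval (P q.1.1 q.1.2) d * eval (P q.1.1 q.1.2) (G 3) *
        eval (P q.1.1 q.1.2) (Q1 q.1)) = 0 := by linear_combination (e1 - e2) / 2
      exact (mul_eq_zero.1 this).resolve_right (mul_ne_zero (mul_ne_zero hd0 hl) hf)
  have key2 : ∀ q : T1, c (.inl q) = 0 ∧
      ∑ p : T2, c (.inr (.inr (.inr p))) * eval (P q.1.1 q.1.2) (Q2 p.1) = 0 := by
    intro q
    have E : ∀ m n, (m = q.1.1 ∧ n = q.1.2 ∨ m = q.1.2 ∧ n = q.1.1) →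
        c (.inl q) * eval (P m n) (Q1 q.1) + eval (P m n) d *
        ∑ p : T2, c (.inr (.inr (.inr p))) * eval (P m n) (Q2 p.1) = 0 := by
      intro m n hmn
      have hne : m ≠ n := by
        have := q.2.ne
        rcases hmn with ⟨rfl, rfl⟩ | ⟨rfl, rfl⟩
        · exact this
        · exact this.symm
      have := (W_cond _ h m n hne).2
      simp only [Fintype.sum_sum_type, v, Sum.elim_inl, Sum.elim_inr, map_add, map_sum, map_smul,
        (key _).1, (key _).2, zero_smul, Finset.sum_const_zero, zero_add,
        dirDeriv_mul _ _ polyS, eval_SP, zero_mul, smul_eq_mul, map_mul, dirDeriv_SP] at this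
      rw [Finset.sum_eq_single q] at this
      · have hb := pow_ne_zero 2 (br_ne n m hne.symm)
        refine (mul_eq_zero.1 (?_ : (ca n * cb m - cb n * ca m) ^ 2 * _ = 0)).resolve_left hb
        rw [Finset.mul_sum, mul_add, Finset.mul_sum]
        rw [← neg_eq_zero, ← this, neg_add, ← Finset.sum_neg_distrib]
        congr 1
        · ring
        · exact Finset.sum_congr rfl fun p _ => by ring
      · intro p _ hp; rw [ev q m n hmn p hp]; ring
      · simp
    have e1 := E _ _ (.inl ⟨rfl, rfl⟩)
    have e2 := E _ _ (.inr ⟨rfl, rfl⟩)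
    have hs : eval (P q.1.2 q.1.1) (Q1 q.1) = eval (P q.1.1 q.1.2) (Q1 q.1) := eval_prod_symm _ _ _
    have hs2 : ∀ p, eval (P q.1.2 q.1.1) (Q2 p) = eval (P q.1.1 q.1.2) (Q2 p) :=
      fun p => eval_prod_symm _ _ _
    have hd : eval (P q.1.2 q.1.1) d = - eval (P q.1.1 q.1.2) d := by
      rw [eval_dP, eval_dP]; ring
    simp only [hs, hs2, hd] at e2
    have hf := Q1_ne q.1.1 q.1.2
    have hd0 : eval (P q.1.1 q.1.2) d ≠ 0 := by
      rw [eval_dP]; exact br_ne _ _ q.2.ne'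
    constructor
    · have : c (.inl q) * eval (P q.1.1 q.1.2) (Q1 q.1) = 0 := by
        linear_combination (e1 + e2) / 2
      exact (mul_eq_zero.1 this).resolve_right hf
    · refine (mul_eq_zero.1 (?_ : eval (P q.1.1 q.1.2) d * _ = 0)).resolve_left hd0
      linear_combination (e1 - e2) / 2
  funext i
  rcases i with q | q | q | q
  · exact (key2 q).1
  · exact (key q).1
  · exact (key q).2
  · have := (key2 ⟨q.1, q.2.1⟩).2
    rw [Finset.sum_eq_single q] at this
    · exact (mul_eq_zero.1 this).resolve_right (Q2_ne _ _)
    · intro p _ hp; rw [Q2_zero q p hp]; ring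
    · simp

lemma W_le : sexticsAdaptedToCusps ≤ homogeneousSubmodule (Fin 4) ℂ 6 := inf_le_left

instance : Module.Finite ℂ sexticsAdaptedToCusps :=
  Module.Finite.of_injective (Submodule.inclusion W_le) (Submodule.inclusion_injective _)

lemma upper : Module.finrank ℂ sexticsAdaptedToCusps ≤ 29 := by
  let f : (T1 ⊕ T1 ⊕ T1 ⊕ T2 → ℂ) →ₗ[ℂ] homogeneousSubmodule (Fin 4) ℂ 6 :=
    Fintype.linearCombination ℂ fun i => (⟨v i, hom_v i⟩ : homogeneousSubmodule (Fin 4) ℂ 6)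
  have hf : ∀ c, (f c : MvPolynomial (Fin 4) ℂ) = ∑ i, c i • v i := fun c => by
    simp [f, Fintype.linearCombination_apply]
  let W' := sexticsAdaptedToCusps.comap (homogeneousSubmodule (Fin 4) ℂ 6).subtype
  have hW : Module.finrank ℂ W' = Module.finrank ℂ sexticsAdaptedToCusps :=
    (Submodule.comapSubtypeEquivOfLe W_le).finrank_eq
  have inj : Function.Injective f := by
    rw [← LinearMap.ker_eq_bot, LinearMap.ker_eq_bot']
    intro c hc
    apply v_indep
    rw [← hf, hc]
    exact Submodule.zero_mem _
  have disj : Disjoint (LinearMap.range f) W' := by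
    rw [Submodule.disjoint_def]
    rintro _ ⟨c, rfl⟩ hc
    have : c = 0 := v_indep c (by rw [← hf]; exact hc)
    rw [this, map_zero]
  have := Submodule.finrank_add_finrank_le_of_disjoint disj
  rw [LinearMap.finrank_range_of_inj inj, hW, finrank_hom6, Module.finrank_pi] at this
  have hc : Fintype.card (T1 ⊕ T1 ⊕ T1 ⊕ T2) = 55 := by
    have h1 : Fintype.card T1 = 15 := by decide
    have h2 : Fintype.card T2 = 10 := by decide
    rw [Fintype.card_sum, Fintype.card_sum, Fintype.card_sum, h1, h2]
  omega

/-! ### Lower bound -/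

noncomputable def R (i : Fin 6) : MvPolynomial (Fin 4) ℂ := ∏ k ∈ Finset.univ.erase i, polyF k

lemma hom_R (i : Fin 6) : (R i).IsHomogeneous 5 := by
  have : (Finset.univ.erase i).card = 5 := by simp
  exact this ▸ hom_prod (Finset.univ.erase i)

lemma mem_of_factor (g : MvPolynomial (Fin 4) ℂ) (hom : g.IsHomogeneous 6)
    (h : ∀ i j : Fin 6, i ≠ j → polyF i ∣ g ∨ polyF j ∣ g) : g ∈ sexticsAdaptedToCusps := by
  rw [mem_W]
  refine ⟨hom, fun i j hij x _ hi hj _ => ?_⟩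
  rcases h i j hij.ne with ⟨q, rfl⟩ | ⟨q, rfl⟩
  · refine ⟨by simp [hi], fun w wi wj => ?_⟩
    rw [dirDeriv_mul, dirDeriv_F, hi, wi]; ring
  · refine ⟨by simp [hj], fun w wi wj => ?_⟩
    rw [dirDeriv_mul, dirDeriv_F, hj, wj]; ring

lemma mem_R (i : Fin 6) (l : MvPolynomial (Fin 4) ℂ) (hl : l.IsHomogeneous 1) :
    R i * l ∈ sexticsAdaptedToCusps := by
  refine mem_of_factor _ ((hom_R i).mul hl) fun a b hab => ?_
  by_cases ha : a = i
  · exact .inr (Dvd.dvd.mul_right (Finset.dvd_prod_of_mem _ (by simp; rintro rfl; exact hab ha)) _)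
  · exact .inl (Dvd.dvd.mul_right (Finset.dvd_prod_of_mem _ (by simpa using ha)) _)

lemma mem_all : ∏ k, polyF k ∈ sexticsAdaptedToCusps :=
  mem_of_factor _ (hom_prod Finset.univ) fun a _ _ => .inl (Finset.dvd_prod_of_mem _ (by simp))

lemma mem_SS (q : MvPolynomial (Fin 4) ℂ) (hq : q.IsHomogeneous 2) :
    polyS * (polyS * q) ∈ sexticsAdaptedToCusps := by
  rw [mem_W]
  refine ⟨hom_S.mul (hom_S.mul hq), fun i j hij x _ hi hj hS => ⟨by simp [hS], fun w _ _ => ?_⟩⟩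
  rw [dirDeriv_mul, eval_mul, hS]; ring

noncomputable def u : Fin 6 ⊕ Fin 6 ⊕ Fin 6 ⊕ Unit → MvPolynomial (Fin 4) ℂ :=
  Sum.elim (fun i => R i * G 3) <| Sum.elim (fun i => R i * G 4) <|
    Sum.elim (fun i => R i * d) (fun _ => ∏ k, polyF k)

lemma u_mem (i) : u i ∈ sexticsAdaptedToCusps := by
  rcases i with p | p | p | p
  · exact mem_R _ _ (hom_G 3)
  · exact mem_R _ _ (hom_G 4)
  · exact mem_R _ _ hom_d
  · exact mem_all

lemma u_indep (c : Fin 6 ⊕ Fin 6 ⊕ Fin 6 ⊕ Unit → ℂ) (q : MvPolynomial (Fin 4) ℂ)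
    (h : ∑ i, c i • u i + polyS * (polyS * q) = 0) : c = 0 ∧ q = 0 := by
  have E : ∀ (i : Fin 6) (τ : ℂ) (hτ : ∀ k, ca k * τ - cb k * 1 ≠ 0) (x : Fin 4 → ℂ),
      (x = pt (ca i) (cb i) 1 τ ∨ x = pt 1 τ (ca i) (cb i)) →
      c (.inl i) * eval x (G 3) + c (.inr (.inl i)) * eval x (G 4) +
        c (.inr (.inr (.inl i))) * eval x d = 0 := by
    intro i τ hτ x hx
    have hS : eval x polyS = 0 := by rcases hx with rfl | rfl <;> exact eval_S _ _ _ _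
    have hF : ∀ k, eval x (polyF k) = (ca k * cb i - cb k * ca i) * (ca k * τ - cb k * 1) := by
      intro k
      rcases hx with rfl | rfl <;> rw [eval_F]; ring
    have hR0 : ∀ j, j ≠ i → eval x (R j) = 0 := by
      intro j hj
      rw [R, map_prod]
      exact Finset.prod_eq_zero (i := i) (by simpa using hj.symm) (by rw [hF]; ring)
    have hA : ∏ k, eval x (polyF k) = 0 :=
      Finset.prod_eq_zero (Finset.mem_univ i) (by rw [hF]; ring)
    have hR : eval x (R i) ≠ 0 := by
      rw [R, map_prod]
      refine Finset.prod_ne_zero_iff.2 fun k hk => ?_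
      rw [hF]
      exact mul_ne_zero (br_ne _ _ (by simpa using hk)) (hτ k)
    have := congrArg (eval x) h
    simp only [Fintype.sum_sum_type, u, Sum.elim_inl, Sum.elim_inr, map_add, map_sum, smul_eval,
      map_mul, hS, zero_mul, mul_zero, Finset.sum_const_zero, add_zero, map_zero, map_prod, hA] at this
    rw [Finset.sum_eq_single i, Finset.sum_eq_single i, Finset.sum_eq_single i] at this
    · refine (mul_eq_zero.1 (?_ : eval x (R i) * _ = 0)).resolve_left hR
      linear_combination this
    all_goals first
      | (intro j _ hj; rw [hR0 j hj]; ring)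
      | simp
  have k12 : ∀ i, c (.inr (.inl i)) = 0 ∧ c (.inr (.inr (.inl i))) = 0 := by
    intro i
    have e1 := E i 3 br3_ne _ (.inl rfl)
    have e2 := E i 3 br3_ne _ (.inr rfl)
    simp only [eval_G, eval_d] at e1 e2
    constructor
    · have : c (.inr (.inl i)) * (ca i * 4 - cb i * 1) = 0 := by
        linear_combination (e1 + e2) / 2
      exact (mul_eq_zero.1 this).resolve_right (br4_ne i)
    · have : c (.inr (.inr (.inl i))) * (ca i * 3 - cb i * 1) = 0 := by
        linear_combination (e2 - e1) / 2
      exact (mul_eq_zero.1 this).resolve_right (br3_ne i)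
  have k0 : ∀ i, c (.inl i) = 0 := by
    intro i
    have e1 := E i 4 br4_ne _ (.inl rfl)
    rw [(k12 i).1, (k12 i).2] at e1
    simp only [eval_G] at e1
    have : c (.inl i) * (ca i * 3 - cb i * 1) = 0 := by linear_combination -e1
    exact (mul_eq_zero.1 this).resolve_right (br3_ne i)
  have k3 : c (.inr (.inr (.inr ()))) = 0 := by
    have := congrArg (eval (pt 1 3 1 4)) h
    simp only [Fintype.sum_sum_type, u, Sum.elim_inl, Sum.elim_inr, map_add, map_sum, smul_eval,
      map_mul, eval_S, zero_mul, Finset.sum_const_zero, add_zero, map_zero, map_prod,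
      k0, (k12 _).1, (k12 _).2, zero_add, Finset.univ_unique, Finset.sum_singleton] at this
    refine (mul_eq_zero.1 this).resolve_right (Finset.prod_ne_zero_iff.2 fun k _ => ?_)
    rw [eval_F]
    exact mul_ne_zero (br3_ne k) (br4_ne k)
  have hc : c = 0 := by
    funext i
    rcases i with p | p | p | p
    · exact k0 p
    · exact (k12 p).1
    · exact (k12 p).2
    · exact k3
  refine ⟨hc, ?_⟩
  rw [hc] at h
  have hS : polyS ≠ 0 := by
    intro e
    have := congrArg (eval ![1, 1, 0, 0]) e
    simp [polyS] at this
  simpa [hS] using h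

lemma lower : 29 ≤ Module.finrank ℂ sexticsAdaptedToCusps := by
  let f1 : (Fin 6 ⊕ Fin 6 ⊕ Fin 6 ⊕ Unit → ℂ) →ₗ[ℂ] MvPolynomial (Fin 4) ℂ :=
    Fintype.linearCombination ℂ u
  let f2 : homogeneousSubmodule (Fin 4) ℂ 2 →ₗ[ℂ] MvPolynomial (Fin 4) ℂ :=
    (LinearMap.mulLeft ℂ polyS ∘ₗ LinearMap.mulLeft ℂ polyS) ∘ₗ
      (homogeneousSubmodule (Fin 4) ℂ 2).subtype
  let f := f1.coprod f2
  have hf : ∀ c, f c = ∑ i, c.1 i • u i + polyS * (polyS * (c.2 : MvPolynomial (Fin 4) ℂ)) :=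
    fun c => by simp [f, f1, f2, Fintype.linearCombination_apply]
  have hmem : ∀ c, f c ∈ sexticsAdaptedToCusps := by
    intro c
    rw [hf]
    exact Submodule.add_mem _ (Submodule.sum_mem _ fun i _ => Submodule.smul_mem _ _ (u_mem i))
      (mem_SS _ c.2.2)
  have inj : Function.Injective (f.codRestrict _ hmem) := by
    rw [← LinearMap.ker_eq_bot, LinearMap.ker_codRestrict, LinearMap.ker_eq_bot']
    intro c hc
    rw [hf] at hc
    obtain ⟨h1, h2⟩ := u_indep _ _ hc
    exact Prod.ext h1 (Subtype.ext h2)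
  have := LinearMap.finrank_le_finrank_of_injective inj
  rw [Module.finrank_prod, Module.finrank_pi, finrank_hom2] at this
  simpa using this

end Cusp

/-- The conditions at the `30` cusps have rank `55` on the `84`-dimensional space of
sextic forms: the space of adapted sextics has dimension `29`. -/
theorem finrank_sextics_adapted_to_cusps :
    Module.finrank ℂ ↥sexticsAdaptedToCusps = 29 :=
  le_antisymm Cusp.upper Cusp.lower
end
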